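/- Local consistency implies global consistency: in a BMTS where every state has satisfiable obligation Φ(s), every state has at least one implementation, i.e., ⟦s⟧ ≠ ∅ for every state s. -/

import Mathlib

/-- Boolean formulae over a set of atomic propositions `X`. -/
inductive BForm (X : Type) : Type where
  | tt : BForm X
  | var : X → BForm X
  | neg : BForm X → BForm X
  | and : BForm X → BForm X → BForm X
  | or : BForm X → BForm X → BForm X

/-- Satisfaction of a Boolean formula under a valuation (set of true atoms). -/
def BForm.sat {X : Type} (ν : Set X) : BForm X → Prop
  | .tt => True
  | .var x => x ∈ ν
  | .neg φ => ¬ BForm.sat ν φ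
  | .and φ ψ => BForm.sat ν φ ∧ BForm.sat ν ψ
  | .or φ ψ => BForm.sat ν φ ∨ BForm.sat ν ψ

/-- Substitute a formula for each atom. -/
def BForm.map {X Y : Type} (f : X → BForm Y) : BForm X → BForm Y
  | .tt => .tt
  | .var x => f x
  | .neg φ => .neg (BForm.map f φ)
  | .and φ ψ => .and (BForm.map f φ) (BForm.map f ψ)
  | .or φ ψ => .or (BForm.map f φ) (BForm.map f ψ)

def BForm.xor {X : Type} (φ ψ : BForm X) : BForm X :=
  .or (.and φ (.neg ψ)) (.and (.neg φ) ψ)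

def BForm.iff {X : Type} (φ ψ : BForm X) : BForm X :=
  .and (.or (.neg φ) ψ) (.or φ (.neg ψ))

/-- A parametric modal transition system over alphabet `A`, states `S`, parameters `P`. -/
structure PMTS (A S P : Type) : Type where
  T : Set (S × A × S)
  Φ : S → BForm ((A × S) ⊕ P)

/-- A Boolean modal transition system is a PMTS with an empty parameter set. -/
abbrev BMTS (A S : Type) := PMTS A S Empty

/-- `T(s)`: the outgoing transitions of `s`. -/
def PMTS.Tsucc {A S P : Type} (M : PMTS A S P) (s : S) : Set (A × S) :=
  {p | (s, p.1, p.2) ∈ M.T}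

/-- `Tran_ν(s)`: admissible sets of outgoing transitions under parameter valuation `ν`. -/
def PMTS.Tran {A S P : Type} (M : PMTS A S P) (ν : Set P) (s : S) : Set (Set (A × S)) :=
  {E | E ⊆ M.Tsucc s ∧ BForm.sat (Sum.inl '' E ∪ Sum.inr '' ν) (M.Φ s)}

open Classical in
/-- Substitution of truth values for parameters according to a valuation `ν`. -/
noncomputable def paramSubst {X P : Type} (ν : Set P) : X ⊕ P → BForm (X ⊕ Empty)
  | Sum.inl x => .var (Sum.inl x)
  | Sum.inr p => if p ∈ ν then .tt else .neg .tt

/-- The BMTS `M^ν` induced by a parameter valuation `ν`. -/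
noncomputable def PMTS.toBMTS {A S P : Type} (M : PMTS A S P) (ν : Set P) : BMTS A S where
  T := M.T
  Φ := fun s => (M.Φ s).map (paramSubst ν)

/-- The modal-refinement condition on a relation `R`, w.r.t. valuations `μ` and `ν`. -/
def RefCond {A S1 S2 P1 P2 : Type} (M1 : PMTS A S1 P1) (M2 : PMTS A S2 P2)
    (μ : Set P1) (ν : Set P2) (R : Set (S1 × S2)) : Prop :=
  ∀ p ∈ R, ∀ Ms ∈ M1.Tran μ p.1, ∃ N ∈ M2.Tran ν p.2,
    (∀ q ∈ Ms, ∃ t' : S2, (q.1, t') ∈ N ∧ (q.2, t') ∈ R) ∧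
    (∀ q ∈ N, ∃ s' : S1, (q.1, s') ∈ Ms ∧ (s', q.2) ∈ R)

/-- `R` is a modal refinement relation between two BMTS. -/
def IsRefRel {A S1 S2 : Type} (M1 : BMTS A S1) (M2 : BMTS A S2) (R : Set (S1 × S2)) : Prop :=
  RefCond M1 M2 ∅ ∅ R

/-- Modal refinement on BMTS. -/
def BRefines {A S1 S2 : Type} (M1 : BMTS A S1) (M2 : BMTS A S2) (s : S1) (t : S2) : Prop :=
  ∃ R : Set (S1 × S2), (s, t) ∈ R ∧ IsRefRel M1 M2 R

/-- Modal refinement on PMTS (valuation-wise definition). -/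
def PRefines {A S1 S2 P1 P2 : Type} (M1 : PMTS A S1 P1) (M2 : PMTS A S2 P2)
    (s : S1) (t : S2) : Prop :=
  ∀ μ : Set P1, ∃ ν : Set P2, BRefines (M1.toBMTS μ) (M2.toBMTS ν) s t

/-- An implementation: every state's only admissible transition set is its full set of
transitions (i.e. `Φ(s)` is the conjunction of all outgoing transitions). -/
def PMTS.IsImplementation {A S : Type} (M : BMTS A S) : Prop :=
  ∀ s : S, M.Tran ∅ s = {M.Tsucc s}

/-- Thorough refinement: inclusion of sets of implementations. -/
def ThoroughRefines {A S1 S2 P1 P2 : Type} (M1 : PMTS A S1 P1) (M2 : PMTS A S2 P2)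
    (s : S1) (t : S2) : Prop :=
  ∀ (SI : Type) (I : BMTS A SI) (i : SI), I.IsImplementation →
    PRefines I M1 i s → PRefines I M2 i t

/-- A PMTS is deterministic if no state has two distinct successors under the same action. -/
def PMTS.Deterministic {A S P : Type} (M : PMTS A S P) : Prop :=
  ∀ s a t t', (s, a, t) ∈ M.T → (s, a, t') ∈ M.T → t = t'

/-- Global (semantic) consistency: every state has an implementation. -/
def PMTS.SemConsistent {A S : Type} (M : BMTS A S) : Prop :=
  ∀ s : S, ∃ (SI : Type) (I : BMTS A SI) (i : SI), I.IsImplementation ∧ BRefines I M i s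

/-- Parameter substitution used in the de-parameterization, also retagging states
with the valuation. -/
def deParamSubst {A S P : Type} [DecidableEq P] (ν : Finset P) :
    (A × S) ⊕ P → BForm ((A × Option (S × Finset P)) ⊕ Empty)
  | Sum.inl q => .var (Sum.inl (q.1, some (q.2, ν)))
  | Sum.inr p => if p ∈ ν then .tt else .neg .tt

/-- The de-parameterization `M^B` of a PMTS `M` with initial state `s0`.
The state `none` plays the rôle of `s0^B`. -/
noncomputable def PMTS.deParam {A S P : Type} [Fintype P] [DecidableEq P] (M : PMTS A S P) (s0 : S) :
    BMTS A (Option (S × Finset P)) where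
  T := {x | (∃ a s ν, x = (none, a, some (s, ν)) ∧ (s0, a, s) ∈ M.T) ∨
            (∃ s a s' ν, x = (some (s, ν), a, some (s', ν)) ∧ (s, a, s') ∈ M.T)}
  Φ := fun st => match st with
    | none => (Finset.univ : Finset (Finset P)).toList.foldr
        (fun ν acc => BForm.xor ((M.Φ s0).map (deParamSubst ν)) acc) (.neg .tt)
    | some (s, ν) => (M.Φ s).map (deParamSubst ν)

/-- The set of `a`-successors of a set of states. -/
def PMTS.succSet {A S P : Type} (M : PMTS A S P) (X : Set S) (a : A) : Set S :=
  {s' | ∃ s ∈ X, (s, a, s') ∈ M.T}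

/-- The deterministic hull `𝒟(M)` of a PMTS (powerset construction). -/
noncomputable def PMTS.detHull {A S P : Type} [Fintype S] (M : PMTS A S P) :
    PMTS A (Set S) P where
  T := {x | x.2.2 = M.succSet x.1 x.2.1}
  Φ := fun X => ((Set.toFinite X).toFinset).toList.foldr
    (fun s acc => .or ((M.Φ s).map (fun y => match y with
      | Sum.inl q => .var (Sum.inl (q.1, M.succSet X q.1))
      | Sum.inr p => .var (Sum.inr p))) acc) (.neg .tt)

open Classical in
/-- The parameter-free hull `𝒫(M)` of a PMTS. -/
noncomputable def PMTS.pfHull {A S P : Type} [Fintype P] [DecidableEq P] (M : PMTS A S P) :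
    BMTS A S where
  T := M.T
  Φ := fun s => (Finset.univ : Finset (Finset P)).toList.foldr
    (fun ν acc => .or ((M.Φ s).map (paramSubst (↑ν : Set P))) acc) (.neg .tt)

open Classical in
/-- Removing a state `s` (and all transitions involving it) from a BMTS. -/
noncomputable def PMTS.removeState {A S : Type} (M : BMTS A S) (s : S) :
    BMTS A {t : S // t ≠ s} where
  T := {x | (x.1.1, x.2.1, x.2.2.1) ∈ M.T}
  Φ := fun t => (M.Φ t.1).map (fun y => match y with
    | Sum.inl q => if h : q.2 = s then .neg .tt else .var (Sum.inl (q.1, ⟨q.2, h⟩))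
    | Sum.inr e => Empty.elim e)

/-- The PMTS witnessing the unavoidable exponential blowup of de-parameterization:
actions are the parameters, and both steps must take exactly the transitions whose
parameter is true. -/
noncomputable def blowupPMTS (P : Type) [Fintype P] [DecidableEq P] : PMTS P (Fin 3) P where
  T := {x | ∃ p : P, x = (0, p, 1) ∨ x = (1, p, 2)}
  Φ := fun s =>
    if s = 0 then
      (Finset.univ : Finset P).toList.foldr
        (fun p acc => .and (BForm.iff (.var (Sum.inl (p, (1 : Fin 3)))) (.var (Sum.inr p))) acc) .tt
    else if s = 1 then
      (Finset.univ : Finset P).toList.foldr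
        (fun p acc => .and (BForm.iff (.var (Sum.inl (p, (2 : Fin 3)))) (.var (Sum.inr p))) acc) .tt
    else .tt

/-- A classical modal transition system. -/
structure MTS (A S : Type) where
  may : Set (S × A × S)
  must : Set (S × A × S)
  must_sub : must ⊆ may

/-- Classical MTS modal refinement. -/
def MTSRefines {A S1 S2 : Type} (N1 : MTS A S1) (N2 : MTS A S2) (s0 : S1) (t0 : S2) : Prop :=
  ∃ R : Set (S1 × S2), (s0, t0) ∈ R ∧ ∀ p ∈ R,
    (∀ a s', (p.1, a, s') ∈ N1.may → ∃ t', (p.2, a, t') ∈ N2.may ∧ (s', t') ∈ R) ∧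
    (∀ a t', (p.2, a, t') ∈ N2.must → ∃ s', (p.1, a, s') ∈ N1.must ∧ (s', t') ∈ R)

/-- A BMTS corresponds to an MTS when its transitions are the may-transitions and the
admissible transition sets are exactly those between the must- and may-successors
(i.e. `Φ(s)` is the conjunction of the must-transitions of `s`). -/
def Corresponds {A S : Type} (N : MTS A S) (M : BMTS A S) : Prop :=
  M.T = N.may ∧
  ∀ s, M.Tran ∅ s = {E | {q : A × S | (s, q.1, q.2) ∈ N.must} ⊆ E ∧ E ⊆ M.Tsucc s}

/-- The `Avoid` set: the least set of pairs `(s, 𝒯)` closed under the rules of the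
thorough-refinement algorithm for BMTS. -/
inductive Avoid {A S : Type} (M : BMTS A S) : S → Set S → Prop
  | empty (s : S) : Avoid M s ∅
  | step (s : S) (𝒯 : Set S) (Ms : Set (A × S)) (later : A → S → Set (A × S) → Set S)
      (hM : Ms ∈ M.Tran ∅ s)
      (h1 : ∀ t ∈ 𝒯, ∀ Nt ∈ M.Tran ∅ t, ∃ a : A,
        (∃ ta, (a, ta) ∈ Nt ∧ ∀ sa, (a, sa) ∈ Ms →
          ∀ f, (∃ t' ∈ 𝒯, f ∈ M.Tran ∅ t') → ta ∈ later a sa f) ∨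
        (∃ sa, (a, sa) ∈ Ms ∧ ∀ ta, (a, ta) ∈ Nt → ta ∈ later a sa Nt))
      (h2 : ∀ f, (∃ t' ∈ 𝒯, f ∈ M.Tran ∅ t') →
        ∀ a sa, (a, sa) ∈ Ms → Avoid M sa (later a sa f)) :
      Avoid M s 𝒯

/-- The decreasing sequence `Rⁿ_{μ,ν}` of bounded modal refinement relations. -/
def BoundedRel {A S1 S2 P1 P2 : Type} (M1 : PMTS A S1 P1) (M2 : PMTS A S2 P2)
    (μ : Set P1) (ν : Set P2) : ℕ → Set (S1 × S2)
  | 0 => Set.univ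
  | n + 1 => {p | ∀ Ms ∈ M1.Tran μ p.1, ∃ N ∈ M2.Tran ν p.2,
      (∀ q ∈ Ms, ∃ t' : S2, (q.1, t') ∈ N ∧ (q.2, t') ∈ BoundedRel M1 M2 μ ν n) ∧
      (∀ q ∈ N, ∃ s' : S1, (q.1, s') ∈ Ms ∧ (s', q.2) ∈ BoundedRel M1 M2 μ ν n)}

/-- The de-negation DMTS `M^D` of a BMTS: its states are the admissible transition sets. -/
noncomputable def PMTS.deNeg {A S : Type} [Fintype A] [Fintype S] (M : BMTS A S) :
    BMTS A (Set (A × S)) where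
  T := {x | ∃ s' : S, (x.2.1, s') ∈ x.1 ∧ x.2.2 ∈ M.Tran ∅ s'}
  Φ := fun E => ((Set.toFinite E).toFinset).toList.foldr
    (fun q acc => .and
      (((Set.toFinite (M.Tran ∅ q.2)).toFinset).toList.foldr
        (fun M' acc2 => .or (.var (Sum.inl (q.1, M'))) acc2) (.neg .tt)) acc) .tt

/-!
Whether a valuation satisfies `Φ(s)` depends only on the finitely many atoms occurring in `Φ(s)`,
so an admissible transition set can be cut down to a finite one. Choosing such a set `E s` for every
state `s` and taking the conjunction of `E s` as the obligation of `s` yields an implementation on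
the same states, and the identity relation is a modal refinement from it to the given system.
-/

namespace BForm

variable {X : Type}

/-- The atomic propositions occurring in a formula. -/
def atoms : BForm X → Set X
  | .tt => ∅
  | .var x => {x}
  | .neg φ => φ.atoms
  | .and φ ψ => φ.atoms ∪ ψ.atoms
  | .or φ ψ => φ.atoms ∪ ψ.atoms

theorem finite_atoms (φ : BForm X) : φ.atoms.Finite := by
  induction φ with
  | tt => exact Set.finite_empty
  | var x => exact Set.finite_singleton x
  | neg _ ih => exact ih
  | and _ _ ihφ ihψ => exact ihφ.union ihψ
  | or _ _ ihφ ihψ => exact ihφ.union ihψ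

theorem sat_congr {ν μ : Set X} {φ : BForm X} (h : ∀ x ∈ φ.atoms, x ∈ ν ↔ x ∈ μ) :
    φ.sat ν ↔ φ.sat μ := by
  induction φ with
  | tt => rfl
  | var x => exact h x rfl
  | neg _ ih => exact not_congr (ih h)
  | and _ _ ihφ ihψ =>
    exact and_congr (ihφ fun x hx => h x (.inl hx)) (ihψ fun x hx => h x (.inr hx))
  | or _ _ ihφ ihψ =>
    exact or_congr (ihφ fun x hx => h x (.inl hx)) (ihψ fun x hx => h x (.inr hx))

/-- The conjunction of a finite set of atoms, used as the obligation of a state all of whose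
transitions are required; the conjuncts are listed in an arbitrary order. -/
noncomputable def conj (s : Finset X) : BForm X :=
  s.toList.foldr (fun x φ => .and (.var x) φ) .tt

theorem sat_conj {ν : Set X} {s : Finset X} : (conj s).sat ν ↔ ↑s ⊆ ν := by
  have sat_foldr (l : List X) :
      sat ν (l.foldr (fun x φ => .and (.var x) φ) .tt) ↔ ∀ x ∈ l, x ∈ ν := by
    induction l with
    | nil => simp [sat]
    | cons x l ih => simp [sat, ih]
  simp only [conj, sat_foldr, Finset.mem_toList, Set.subset_def, SetLike.mem_coe]

end BForm

namespace PMTS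

theorem exists_finset_mem_tran {A S P : Type} {M : PMTS A S P} {ν : Set P} {s : S}
    (h : (M.Tran ν s).Nonempty) : ∃ F : Finset (A × S), ↑F ∈ M.Tran ν s := by
  obtain ⟨E, hE, hsat⟩ := h
  have hfin : (E ∩ Sum.inl ⁻¹' (M.Φ s).atoms).Finite :=
    ((M.Φ s).finite_atoms.preimage Sum.inl_injective.injOn).inter_of_right E
  refine ⟨hfin.toFinset, ?_⟩
  rw [hfin.coe_toFinset]
  refine ⟨Set.inter_subset_left.trans hE, (BForm.sat_congr ?_).mp hsat⟩
  rintro (q | p) hx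
  · simp_all
  · simp

variable {A S : Type}

/-- The implementation on the states `S` in which the transitions from `s` are exactly those
in `E s`. The sets are finite because the obligation of `s` has to name all of them. -/
noncomputable def ofSuccessors (E : S → Finset (A × S)) : BMTS A S where
  T := {x | x.2 ∈ E x.1}
  Φ s := BForm.conj ((E s).map ⟨Sum.inl, Sum.inl_injective⟩)

theorem tsucc_ofSuccessors (E : S → Finset (A × S)) (s : S) : (ofSuccessors E).Tsucc s = E s :=
  rfl

theorem isImplementation_ofSuccessors (E : S → Finset (A × S)) :
    (ofSuccessors E).IsImplementation := by
  intro s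
  ext F
  have hsat : BForm.sat (Sum.inl '' F ∪ Sum.inr '' ∅) ((ofSuccessors E).Φ s) ↔ ↑(E s) ⊆ F := by
    rw [ofSuccessors, BForm.sat_conj, Finset.coe_map, Function.Embedding.coeFn_mk,
      Set.image_empty, Set.union_empty, Set.image_subset_image_iff Sum.inl_injective]
  rw [Tran, Set.mem_ofPred_eq, hsat, tsucc_ofSuccessors, Set.mem_singleton_iff,
    Set.Subset.antisymm_iff]

theorem IsImplementation.bRefines {I M : BMTS A S} (hI : I.IsImplementation)
    (h : ∀ s, I.Tsucc s ∈ M.Tran ∅ s) (s : S) : BRefines I M s s := by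
  refine ⟨Set.diagonal S, rfl, ?_⟩
  rintro ⟨t, t'⟩ (rfl : t = t') E hE
  obtain rfl : E = I.Tsucc t := by simpa only [hI t, Set.mem_singleton_iff] using hE
  exact ⟨I.Tsucc t, h t, fun q hq => ⟨q.2, hq, rfl⟩, fun q hq => ⟨q.2, hq, rfl⟩⟩

end PMTS

theorem local_consistency_implies_global_general {A S : Type} (M : BMTS A S)
    (h : ∀ s : S, (M.Tran ∅ s).Nonempty) : M.SemConsistent := by
  choose E hE using fun s => PMTS.exists_finset_mem_tran (h s)
  have hI := PMTS.isImplementation_ofSuccessors E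
  exact fun s => ⟨S, PMTS.ofSuccessors E, s, hI, hI.bRefines hE s⟩

theorem local_consistency_implies_global {A S : Type} [Finite A] [Finite S]
    (M : BMTS A S) (h : ∀ s : S, (M.Tran ∅ s).Nonempty) :
    M.SemConsistent :=
  local_consistency_implies_global_general M h
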